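/- Let r > q ≥ 0 be integers, ν_min > −1, and α a real number with α ≥ ν_min; set m_α := (1+2α−ν_min)/2 > 0. For s > 0 and ζ in the arc A, define Ψ̃(ζ) := −i·logΓ(m_α − i s^ρ ζ) + i·ln Γ(m_α), and set I(s) := −i(c₁+c₂) · (2πi)^{−1} ∫_A Ψ̃(ζ)·(1 − i(Im b₂)/ζ)·(1/r(ζ)) dζ (absolutely convergent). Then I admits the standard divergent expansion with error O(s^{−ρ} ln s) and constant term κ = −((c₁+c₂)/2)·( ln(2π)/2 − ln Γ(m_α) )·(1 − (Im b₂)/|b₂|) − (c₁+c₂)·((2α−ν_min)/2)·( (ln(|b₂|+Im b₂) − ln 2)/2 − ((Im b₂)/(2|b₂|))·ln(2|b₂|²/(|b₂|+Im b₂)) ). -/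

import Mathlib

open Complex Filter MeasureTheory

noncomputable section

/-- Principal branch of log-Gamma on `ℂ ∖ (-∞,0]`. -/
def logGammaP (z : ℂ) : ℂ :=
  -(Real.eulerMascheroniConstant : ℂ) * z - Complex.log z +
    ∑' k : ℕ, (z / ((k : ℂ) + 1) - Complex.log (1 + z / ((k : ℂ) + 1)))

/-- `ρ = 1/(1+c₂)` where `c₂ = r - q`. -/
def rhoOf (c : ℝ) : ℝ := 1 / (1 + c)

/-- `φ ∈ [0, π/2)` with `sin φ = (c-1)/(c+1)`, `c = r - q`. -/
def phiOf (c : ℝ) : ℝ := Real.arcsin ((c - 1) / (c + 1))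

/-- `|b₂|`, determined by `Re b₂ = 2 c^{(1-c)/(2(1+c))}` and `arg b₂ = φ`. -/
def b2abs (c : ℝ) : ℝ := 2 * c ^ ((1 - c) / (2 * (1 + c))) / Real.cos (phiOf c)

/-- The point `b₂ = |b₂| e^{iφ}`. -/
def b2Of (c : ℝ) : ℂ := (b2abs c : ℂ) * Complex.exp ((phiOf c : ℝ) * Complex.I)

/-- Integral along the circular arc `{R e^{iθ} : φ ≤ θ ≤ π - φ}`, oriented counterclockwise. -/
def arcIntegral (R φ : ℝ) (f : ℂ → ℂ) : ℂ :=
  ∫ θ in φ..(Real.pi - φ),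
    f ((R : ℂ) * Complex.exp ((θ : ℝ) * Complex.I)) *
      (Complex.I * (R : ℂ) * Complex.exp ((θ : ℝ) * Complex.I))

/-- The branch `r(ζ) = ζ √(1 - 2i (Im b₂)/ζ - |b₂|²/ζ²)` (principal square root). -/
def rBranch (c : ℝ) (ζ : ℂ) : ℂ :=
  ζ * (1 - 2 * Complex.I * ((b2Of c).im : ℂ) / ζ - ((b2abs c : ℂ)) ^ 2 / ζ ^ 2) ^ ((1 : ℂ) / 2)

/-- `f` admits the standard divergent expansion with constant term `κ` and
error `O(s^{-ρ} ln s)` as `s → +∞`. -/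
def HasStdExpansion (ρ : ℝ) (f : ℝ → ℂ) (κ : ℂ) : Prop :=
  ∃ d₁ d₂ d₃ d₄ d₅ d₆ d₇ : ℂ,
    (fun s : ℝ =>
        f s - (d₁ * (s ^ (2 * ρ) : ℝ) * (Real.log s : ℝ) + d₂ * (s ^ (2 * ρ) : ℝ) +
          d₃ * (s ^ ρ : ℝ) * ((Real.log s : ℝ)) ^ 2 + d₄ * (s ^ ρ : ℝ) * (Real.log s : ℝ) +
          d₅ * (s ^ ρ : ℝ) + d₆ * ((Real.log s : ℝ)) ^ 2 + d₇ * (Real.log s : ℝ) + κ))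
      =O[atTop] fun s : ℝ => s ^ (-ρ) * Real.log s

/-- `Ψ̃(ζ) = -i logΓ(m_α - i s^ρ ζ) + i ln Γ(m_α)`. -/
def PsiTilde (c mα : ℝ) (s : ℝ) (ζ : ℂ) : ℂ :=
  -Complex.I * logGammaP ((mα : ℂ) - Complex.I * (s ^ rhoOf c : ℝ) * ζ) +
    Complex.I * ((Real.log (Real.Gamma mα) : ℝ) : ℂ)

/-- `I(s) = -i(c₁+c₂)(2πi)^{-1} ∫_A Ψ̃(ζ)(1 - i Im b₂/ζ)(1/r(ζ)) dζ`, `c₁+c₂ = 1+(r-q)`. -/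
def Ifun (c mα : ℝ) (s : ℝ) : ℂ :=
  -Complex.I * (((1 + c : ℝ)) : ℂ) * (2 * Real.pi * Complex.I)⁻¹ *
    arcIntegral (b2abs c) (phiOf c)
      (fun ζ => PsiTilde c mα s ζ * (1 - Complex.I * ((b2Of c).im : ℂ) / ζ) * (rBranch c ζ)⁻¹)

/-- The constant term in the asymptotics of `I_{1,α}`. -/
def kappa5 (c mα α νmin : ℝ) : ℝ :=
  -((1 + c) / 2) * (Real.log (2 * Real.pi) / 2 - Real.log (Real.Gamma mα)) *
      (1 - (b2Of c).im / b2abs c) -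
    (1 + c) * ((2 * α - νmin) / 2) *
      ((Real.log (b2abs c + (b2Of c).im) - Real.log 2) / 2 -
        (b2Of c).im / (2 * b2abs c) * Real.log (2 * b2abs c ^ 2 / (b2abs c + (b2Of c).im)))

open Topology

lemma log_mul_of_re_pos {x y : ℂ} (hx : 0 < x.re) (hy : 0 < y.re) :
    Complex.log (x * y) = Complex.log x + Complex.log y := by
  have hx0 : x ≠ 0 := by rintro rfl; simp at hx
  have hy0 : y ≠ 0 := by rintro rfl; simp at hy
  have h1 := abs_lt.1 (Complex.abs_arg_lt_pi_div_two_iff.2 (Or.inl hx))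
  have h2 := abs_lt.1 (Complex.abs_arg_lt_pi_div_two_iff.2 (Or.inl hy))
  exact (Complex.log_mul_eq_add_log_iff hx0 hy0).2 ⟨by linarith [h1.1, h2.1], by linarith [h1.2, h2.2]⟩

lemma inv_re_pos {x : ℂ} (hx : 0 < x.re) : 0 < (1 / x).re := by
  have hx0 : x ≠ 0 := by rintro rfl; simp at hx
  rw [one_div, Complex.inv_re]
  exact div_pos hx (Complex.normSq_pos.2 hx0)

lemma log_add_one_eq {x : ℂ} (hx : 0 < x.re) :
    Complex.log (x + 1) = Complex.log x + Complex.log (1 + 1 / x) := by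
  have hx0 : x ≠ 0 := by rintro rfl; simp at hx
  rw [← log_mul_of_re_pos hx (by have := inv_re_pos hx; simp only [Complex.add_re, Complex.one_re]; linarith)]
  congr 1
  field_simp

lemma log_add_real_eq {x : ℂ} (hx : 0 < x.re) {n : ℝ} (hn : 0 < n) :
    Complex.log (x + n) = (Real.log n : ℂ) + Complex.log (1 + x / n) := by
  have hn0 : (n : ℂ) ≠ 0 := by exact_mod_cast hn.ne'
  have h : (0 : ℝ) < (1 + x / n).re := by
    rw [Complex.add_re, Complex.div_ofReal_re, Complex.one_re]
    positivity
  rw [← Complex.log_ofReal_mul hn (by intro h0; rw [h0] at h; simp at h)]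
  congr 1
  field_simp
  ring

lemma summable_logGammaP (w : ℂ) :
    Summable (fun k : ℕ => (w / ((k : ℂ) + 1) - Complex.log (1 + w / ((k : ℂ) + 1)))) := by
  have h0 : Tendsto (fun k : ℕ => ‖w‖ / ((k : ℝ) + 1)) atTop (𝓝 0) :=
    tendsto_const_nhds.div_atTop (tendsto_atTop_add_const_right _ _ tendsto_natCast_atTop_atTop)
  have hs : Summable (fun k : ℕ => ‖w‖ ^ 2 * (1 / ((k : ℝ) + 1) ^ 2)) := by
    apply Summable.mul_left
    have := (summable_nat_add_iff 1).2 (Real.summable_one_div_nat_pow.2 (one_lt_two))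
    simpa using this
  refine Summable.of_norm_bounded_eventually_nat hs ?_
  filter_upwards [h0.eventually (gt_mem_nhds (show (0 : ℝ) < 1 / 2 by norm_num))] with k hk
  have hn : ‖w / ((k : ℂ) + 1)‖ = ‖w‖ / ((k : ℝ) + 1) := by
    rw [norm_div]
    congr 1
    have : ((k : ℂ) + 1) = (((k : ℝ) + 1 : ℝ) : ℂ) := by push_cast; rfl
    rw [this, Complex.norm_real, Real.norm_of_nonneg (by positivity)]
  rw [norm_sub_rev]
  have h1 : ‖w / ((k : ℂ) + 1)‖ < 1 / 2 := by rw [hn]; exact hk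
  refine (Complex.norm_log_one_add_sub_self_le (by linarith)).trans ?_
  have h2 : (1 - ‖w / ((k : ℂ) + 1)‖)⁻¹ ≤ 2 := by
    rw [inv_le_comm₀ (by linarith) (by norm_num)]; linarith
  calc _ ≤ ‖w / ((k : ℂ) + 1)‖ ^ 2 * 2 / 2 := by gcongr
    _ = _ := by rw [hn]; field_simp

lemma tendsto_logGammaP {w : ℂ} (hw : 0 < w.re) :
    Tendsto (fun N : ℕ => w * (Real.log N : ℂ) + ∑ k ∈ Finset.range N, (Real.log ((k : ℝ) + 1) : ℂ)
      - ∑ k ∈ Finset.range (N + 1), Complex.log (w + k)) atTop (𝓝 (logGammaP w)) := by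
  have h1 := (summable_logGammaP w).hasSum.tendsto_sum_nat
  have h2 : Tendsto (fun N : ℕ => (((harmonic N : ℝ) - Real.log N : ℝ) : ℂ)) atTop
      (𝓝 (Real.eulerMascheroniConstant : ℂ)) :=
    (Complex.continuous_ofReal.tendsto _).comp Real.tendsto_harmonic_sub_log
  have h3 := (h1.sub (h2.mul_const w)).sub_const (Complex.log w)
  have h4 : logGammaP w = (∑' k : ℕ, (w / ((k : ℂ) + 1) - Complex.log (1 + w / ((k : ℂ) + 1)))) -
      (Real.eulerMascheroniConstant : ℂ) * w - Complex.log w := by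
    unfold logGammaP; ring
  rw [h4]
  refine h3.congr fun N => ?_
  have h5 : ∑ k ∈ Finset.range N, (w / ((k : ℂ) + 1) - Complex.log (1 + w / ((k : ℂ) + 1)))
      = (harmonic N : ℂ) * w - ∑ k ∈ Finset.range N, (Complex.log (w + ((k + 1 : ℕ) : ℂ))
        - (Real.log ((k : ℝ) + 1) : ℂ)) := by
    rw [harmonic]
    push_cast
    rw [Finset.sum_mul, ← Finset.sum_sub_distrib]
    refine Finset.sum_congr rfl fun k _ => ?_
    have := log_add_real_eq hw (n := (k : ℝ) + 1) (by positivity)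
    push_cast at this
    rw [this]
    ring
  rw [h5, Finset.sum_range_succ' _ N, Finset.sum_sub_distrib]
  push_cast
  rw [add_zero]
  ring

/-- Main term of Stirling's formula. -/
def stirA (x : ℂ) : ℂ := (x - 1 / 2) * Complex.log x - x

/-- Stirling increment. -/
def stirG (x : ℂ) : ℂ := (x + 1 / 2) * Complex.log (1 + 1 / x) - 1

lemma stirA_add_one {x : ℂ} (hx : 0 < x.re) :
    stirA (x + 1) - stirA x = stirG x + Complex.log x := by
  unfold stirA stirG
  rw [log_add_one_eq hx]
  ring

lemma sum_log_eq {w : ℂ} (hw : 0 < w.re) (N : ℕ) :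
    ∑ k ∈ Finset.range N, Complex.log (w + k) =
      stirA (w + N) - stirA w - ∑ k ∈ Finset.range N, stirG (w + k) := by
  induction N with
  | zero => simp
  | succ N ih =>
    rw [Finset.sum_range_succ, Finset.sum_range_succ, ih]
    have := stirA_add_one (x := w + N) (by simp; positivity)
    have e : w + ((N + 1 : ℕ) : ℂ) = w + N + 1 := by push_cast; ring
    rw [e]
    linear_combination -this

lemma norm_stirG_le {x : ℂ} (hx : 2 ≤ ‖x‖) : ‖stirG x‖ ≤ 2 / ‖x‖ ^ 2 := by
  have hx0 : x ≠ 0 := by intro h; rw [h] at hx; norm_num at hx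
  have hp : 0 < ‖x‖ := by linarith
  have hy : ‖1 / x‖ ≤ 1 / 2 := by
    rw [norm_div, norm_one]; exact one_div_le_one_div_of_le (by norm_num) hx
  have hT := Complex.norm_log_sub_logTaylor_le 2 (z := 1 / x) (by linarith)
  set E := Complex.log (1 + 1 / x) - Complex.logTaylor (2 + 1) (1 / x) with hE
  have hlog : Complex.log (1 + 1 / x) = 1 / x - (1 / x) ^ 2 / 2 + E := by
    rw [hE]
    simp [Complex.logTaylor_succ, Complex.logTaylor_zero]
    ring
  have hG : stirG x = -(1 / x) ^ 2 / 4 + (x + 1 / 2) * E := by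
    unfold stirG; rw [hlog]; field_simp; ring
  have hinv : (1 - ‖1 / x‖)⁻¹ ≤ 2 := by
    rw [inv_le_comm₀ (by linarith) (by norm_num)]; linarith
  have hE' : ‖E‖ ≤ ‖1 / x‖ ^ 3 * 2 / 3 := by
    refine hT.trans ?_
    norm_num
    norm_num at hinv
    gcongr
  have hn : ‖1 / x‖ = 1 / ‖x‖ := by simp
  rw [hn] at hE'
  rw [hG]
  calc _ ≤ ‖-(1 / x) ^ 2 / 4‖ + ‖(x + 1 / 2) * E‖ := norm_add_le _ _
    _ ≤ (1 / ‖x‖) ^ 2 / 4 + (‖x‖ + 1 / 2) * ((1 / ‖x‖) ^ 3 * 2 / 3) := by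
      rw [norm_mul]
      gcongr
      · simp
      · refine (norm_add_le _ _).trans ?_
        norm_num
    _ ≤ _ := by
      have : (1 / ‖x‖) ^ 2 / 4 + (‖x‖ + 1 / 2) * ((1 / ‖x‖) ^ 3 * 2 / 3)
        = (1 / ‖x‖ ^ 2) * (1 / 4 + 2 / 3 + 1 / 3 * (1 / ‖x‖)) := by field_simp; ring
      rw [this]
      have h2 : 1 / ‖x‖ ≤ 1 / 2 := one_div_le_one_div_of_le (by norm_num) hx
      have h3 : 0 < 1 / ‖x‖ ^ 2 := by positivity
      have h4 : 2 / ‖x‖ ^ 2 = 1 / ‖x‖ ^ 2 * 2 := by ring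
      rw [h4]
      gcongr
      linarith

lemma norm_sum_stirG_le {w : ℂ} (hw : 0 ≤ w.re) (hw2 : 2 ≤ ‖w‖) (N : ℕ) :
    ‖∑ k ∈ Finset.range N, stirG (w + k)‖ ≤ 8 / ‖w‖ := by
  have hp : 0 < ‖w‖ := by linarith
  have key : ∀ k : ℕ, ‖stirG (w + k)‖ ≤ 4 * (1 / (‖w‖ + k - 1) - 1 / (‖w‖ + (k + 1 : ℕ) - 1)) := by
    intro k
    have hk : (0 : ℝ) ≤ k := by positivity
    have hsq : ‖w‖ ^ 2 + (k : ℝ) ^ 2 ≤ ‖w + k‖ ^ 2 := by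
      rw [← Complex.normSq_eq_norm_sq, ← Complex.normSq_eq_norm_sq, Complex.normSq_apply, Complex.normSq_apply]
      simp
      nlinarith [mul_nonneg hw hk]
    have h2 : 2 ≤ ‖w + k‖ := by
      have : ‖w‖ ^ 2 ≤ ‖w + k‖ ^ 2 := by nlinarith
      have := (pow_le_pow_iff_left₀ (norm_nonneg _) (norm_nonneg _) two_ne_zero).1 this
      linarith
    refine (norm_stirG_le h2).trans ?_
    have h3 : (‖w‖ + k) * (‖w‖ + k - 1) ≤ 2 * ‖w + k‖ ^ 2 := by
      nlinarith [sq_nonneg (‖w‖ - k)]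
    have h4 : 0 < ‖w‖ + k - 1 := by linarith
    have h5 : 4 * (1 / (‖w‖ + k - 1) - 1 / (‖w‖ + (k + 1 : ℕ) - 1)) = 4 / ((‖w‖ + k) * (‖w‖ + k - 1)) := by
      push_cast
      have : ‖w‖ + (k + 1 : ℝ) - 1 = ‖w‖ + k := by ring
      rw [this]
      field_simp
      ring
    rw [h5, div_le_div_iff₀ (by positivity) (by positivity)]
    linarith
  refine (norm_sum_le _ _).trans ?_
  refine (Finset.sum_le_sum fun k _ => key k).trans ?_
  rw [← Finset.mul_sum, Finset.sum_range_sub' (fun k : ℕ => 1 / (‖w‖ + (k : ℝ) - 1))]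
  have h6 : 0 ≤ 1 / (‖w‖ + (N : ℝ) - 1) := by
    apply one_div_nonneg.2; have : (0 : ℝ) ≤ N := by positivity
    linarith
  have h7 : 1 / (‖w‖ + ((0 : ℕ) : ℝ) - 1) ≤ 2 / ‖w‖ := by
    simp only [Nat.cast_zero, add_zero]
    rw [div_le_div_iff₀ (by linarith) hp]; linarith
  calc _ ≤ 4 * (2 / ‖w‖) := by linarith
    _ = _ := by ring

lemma tendsto_log_fact :
    Tendsto (fun N : ℕ => ∑ k ∈ Finset.range N, Real.log ((k : ℝ) + 1) - (N + 1 / 2) * Real.log N + N)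
      atTop (𝓝 (Real.log (2 * Real.pi) / 2)) := by
  have h1 := ((Real.continuousAt_log (by positivity : √Real.pi ≠ 0)).tendsto.comp
    Stirling.tendsto_stirlingSeq_sqrt_pi).add_const (Real.log 2 / 2)
  have h2 : Real.log √Real.pi + Real.log 2 / 2 = Real.log (2 * Real.pi) / 2 := by
    rw [Real.log_sqrt (by positivity), Real.log_mul (by norm_num) (by positivity)]; ring
  rw [h2] at h1
  refine h1.congr' ?_
  filter_upwards [eventually_gt_atTop 0] with N hN
  have hN' : (0 : ℝ) < N := by exact_mod_cast hN
  have hf : ∑ k ∈ Finset.range N, Real.log ((k : ℝ) + 1) = Real.log (N.factorial) := by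
    rw [← Finset.prod_range_add_one_eq_factorial, Nat.cast_prod, Real.log_prod]
    · push_cast; rfl
    · intro k _; positivity
  rw [hf]
  simp only [Function.comp_apply, Stirling.log_stirlingSeq_formula]
  rw [Real.log_mul (by norm_num) (by positivity), Real.log_div (by positivity) (by positivity), Real.log_exp]
  ring

lemma tendsto_stirA (w : ℂ) (hw : 0 < w.re) :
    Tendsto (fun N : ℕ => (stirA (w + N) - (w + N - 1 / 2) * (Real.log N : ℂ) + N)) atTop (𝓝 0) := by
  have hT : Tendsto (fun x : ℝ ↦ x * Complex.log (1 + w / x)) atTop (𝓝 w) := by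
    apply Complex.tendsto_mul_log_one_add_of_tendsto
    apply tendsto_nhds_of_eventually_eq
    filter_upwards [eventually_ne_atTop 0] with x hx0
    have : (x : ℂ) ≠ 0 := by exact_mod_cast hx0
    field_simp
  have hT' := hT.comp tendsto_natCast_atTop_atTop
  have hi : Tendsto (fun N : ℕ => (1 : ℂ) + (w - 1 / 2) * ((((N : ℝ)⁻¹ : ℝ)) : ℂ)) atTop (𝓝 (1 + (w - 1 / 2) * ((0 : ℝ) : ℂ))) := by
    apply Tendsto.const_add
    apply Tendsto.const_mul
    exact (Complex.continuous_ofReal.tendsto _).comp tendsto_inv_atTop_nhds_zero_nat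
  have h := (hi.mul hT').sub_const w
  simp only [Complex.ofReal_zero, mul_zero, add_zero, one_mul, sub_self] at h
  refine h.congr' ?_
  filter_upwards [eventually_gt_atTop 0] with N hN
  have hN' : (0 : ℝ) < N := by exact_mod_cast hN
  have hN0 : (N : ℂ) ≠ 0 := by exact_mod_cast hN.ne'
  have hl := log_add_real_eq hw hN'
  simp only [Complex.ofReal_natCast] at hl
  unfold stirA
  rw [hl]
  simp only [Function.comp_apply, Complex.ofReal_natCast, Complex.ofReal_inv]
  field_simp
  ring

lemma stirling_logGammaP {w : ℂ} (hw : 0 < w.re) (hw2 : 2 ≤ ‖w‖) :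
    ‖logGammaP w - (stirA w + ((Real.log (2 * Real.pi) / 2 : ℝ) : ℂ))‖ ≤ 8 / ‖w‖ := by
  have h1 := tendsto_logGammaP hw
  have h2 := (Complex.continuous_ofReal.tendsto _).comp tendsto_log_fact
  have h3 := tendsto_stirA w hw
  -- log (w + N) - log N → 0
  have h4 : Tendsto (fun N : ℕ => Complex.log (w + N) - (Real.log N : ℂ)) atTop (𝓝 0) := by
    have : Tendsto (fun N : ℕ => Complex.log (1 + w * ((((N : ℝ)⁻¹ : ℝ)) : ℂ))) atTop (𝓝 (Complex.log (1 + w * ((0 : ℝ) : ℂ)))) := by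
      apply Tendsto.clog
      · apply Tendsto.const_add
        apply Tendsto.const_mul
        exact (Complex.continuous_ofReal.tendsto _).comp tendsto_inv_atTop_nhds_zero_nat
      · simp
    simp only [Complex.ofReal_zero, mul_zero, add_zero, Complex.log_one] at this
    refine this.congr' ?_
    filter_upwards [eventually_gt_atTop 0] with N hN
    have hN' : (0 : ℝ) < N := by exact_mod_cast hN
    have hl := log_add_real_eq hw hN'
    simp only [Complex.ofReal_natCast] at hl
    rw [hl, div_eq_mul_inv]
    simp
  have h5 := ((h1.sub h2).add h3).add h4
  have h6 := (h5.sub_const (stirA w)).norm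
  have h7 : logGammaP w - (stirA w + ((Real.log (2 * Real.pi) / 2 : ℝ) : ℂ)) =
    logGammaP w - ((Real.log (2 * Real.pi) / 2 : ℝ) : ℂ) + 0 + 0 - stirA w := by ring
  rw [h7]
  refine le_of_tendsto h6 (Eventually.of_forall fun N => ?_)
  refine le_trans (le_of_eq ?_) (norm_sum_stirG_le hw.le hw2 N)
  congr 1
  rw [Finset.sum_range_succ, sum_log_eq hw N]
  simp only [Function.comp_apply]
  push_cast
  ring

lemma log_mul_of_re_nonneg {x y : ℂ} (hx : 0 ≤ x.re) (hx0 : x ≠ 0) (hy : 0 < y.re) :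
    Complex.log (x * y) = Complex.log x + Complex.log y := by
  have hy0 : y ≠ 0 := by rintro rfl; simp at hy
  have h1 := abs_le.1 (Complex.abs_arg_le_pi_div_two_iff.2 hx)
  have h2 := abs_lt.1 (Complex.abs_arg_lt_pi_div_two_iff.2 (Or.inl hy))
  exact (Complex.log_mul_eq_add_log_iff hx0 hy0).2 ⟨by linarith [h1.1, h2.1], by linarith [h1.2, h2.2]⟩

lemma stirling_shift {m : ℝ} (hm : 0 < m) : ∃ C T : ℝ, 0 ≤ C ∧ 0 < T ∧ ∀ z : ℂ, 0 ≤ z.re → T ≤ ‖z‖ →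
    ‖logGammaP (m + z) - ((z + m - 1 / 2) * Complex.log z - z +
      ((Real.log (2 * Real.pi) / 2 : ℝ) : ℂ))‖ ≤ C / ‖z‖ := by
  refine ⟨8 + (|m - 1 / 2| * m + (1 + |m - 1 / 2|) * m ^ 2), 2 + 2 * m, by positivity, by positivity, ?_⟩
  intro z hz hT
  have hzp : 0 < ‖z‖ := by linarith
  have hz0 : z ≠ 0 := norm_pos_iff.1 hzp
  have hzw : ‖z‖ ≤ ‖(m : ℂ) + z‖ := by
    rw [← pow_le_pow_iff_left₀ (norm_nonneg _) (norm_nonneg _) two_ne_zero,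
      ← Complex.normSq_eq_norm_sq, ← Complex.normSq_eq_norm_sq, Complex.normSq_apply, Complex.normSq_apply]
    simp
    nlinarith [mul_nonneg hz hm.le]
  have h1 := stirling_logGammaP (w := m + z) (by simp; linarith) (by linarith)
  have h1' : ‖logGammaP (m + z) - (stirA (m + z) + ((Real.log (2 * Real.pi) / 2 : ℝ) : ℂ))‖ ≤ 8 / ‖z‖ :=
    h1.trans (by gcongr)
  have hre : 0 ≤ ((m : ℂ) / z).re := by
    rw [div_eq_mul_inv, Complex.re_ofReal_mul, Complex.inv_re]
    have := Complex.normSq_nonneg z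
    positivity
  have hlog : Complex.log (m + z) = Complex.log z + Complex.log (1 + m / z) := by
    rw [← log_mul_of_re_nonneg hz hz0 (by rw [Complex.add_re, Complex.one_re]; linarith)]
    congr 1
    field_simp
    ring
  have hy : ‖(m : ℂ) / z‖ = m / ‖z‖ := by
    rw [norm_div, Complex.norm_real, Real.norm_of_nonneg hm.le]
  have hy2 : ‖(m : ℂ) / z‖ ≤ 1 / 2 := by
    rw [hy, div_le_div_iff₀ hzp (by norm_num)]; linarith
  have hE := Complex.norm_log_one_add_sub_self_le (z := (m : ℂ) / z) (by linarith)
  set E := Complex.log (1 + m / z) - m / z with hEdef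
  have hinv : (1 - ‖(m : ℂ) / z‖)⁻¹ ≤ 2 := by
    rw [inv_le_comm₀ (by linarith) (by norm_num)]; linarith
  have hE2 : ‖E‖ ≤ (m / ‖z‖) ^ 2 := by
    refine hE.trans ?_
    calc _ ≤ ‖(m : ℂ) / z‖ ^ 2 * 2 / 2 := by gcongr
      _ = _ := by rw [hy]; ring
  have hd : stirA (m + z) - ((z + m - 1 / 2) * Complex.log z - z) =
      ((m : ℂ) - 1 / 2) * (m / z) + (z + (m - 1 / 2)) * E := by
    have : Complex.log (1 + m / z) = m / z + E := by rw [hEdef]; ring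
    unfold stirA
    rw [hlog, this]
    field_simp
    ring
  have hmn : ‖(m : ℂ) - 1 / 2‖ = |m - 1 / 2| := by
    have : (m : ℂ) - 1 / 2 = ((m - 1 / 2 : ℝ) : ℂ) := by push_cast; rfl
    rw [this, Complex.norm_real, Real.norm_eq_abs]
  have h2 : ‖stirA (m + z) - ((z + m - 1 / 2) * Complex.log z - z)‖ ≤
      (|m - 1 / 2| * m + (1 + |m - 1 / 2|) * m ^ 2) / ‖z‖ := by
    rw [hd]
    calc _ ≤ ‖((m : ℂ) - 1 / 2) * (m / z)‖ + ‖(z + (m - 1 / 2)) * E‖ := norm_add_le _ _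
      _ ≤ |m - 1 / 2| * (m / ‖z‖) + (‖z‖ + |m - 1 / 2|) * (m / ‖z‖) ^ 2 := by
        rw [norm_mul, norm_mul, hy, hmn]
        gcongr
        refine (norm_add_le _ _).trans ?_
        rw [hmn]
      _ ≤ |m - 1 / 2| * (m / ‖z‖) + (‖z‖ + |m - 1 / 2| * ‖z‖) * (m / ‖z‖) ^ 2 := by
        have : |m - 1 / 2| ≤ |m - 1 / 2| * ‖z‖ := le_mul_of_one_le_right (abs_nonneg _) (by linarith)
        gcongr
      _ = _ := by field_simp
  calc _ = ‖(logGammaP (m + z) - (stirA (m + z) + ((Real.log (2 * Real.pi) / 2 : ℝ) : ℂ))) +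
      (stirA (m + z) - ((z + m - 1 / 2) * Complex.log z - z))‖ := by congr 1; ring
    _ ≤ 8 / ‖z‖ + (|m - 1 / 2| * m + (1 + |m - 1 / 2|) * m ^ 2) / ‖z‖ :=
      (norm_add_le _ _).trans (add_le_add h1' h2)
    _ = _ := by ring

/-- The angle after the substitution `sin (u/2) = k sin t`. -/
def uu (k t : ℝ) : ℝ := 2 * Real.arcsin (k * Real.sin t)

/-- `cos (u/2)`. -/
def cc (k t : ℝ) : ℝ := √(1 - (k * Real.sin t) ^ 2)

lemma ksin_abs {k : ℝ} (hk : |k| < 1) (t : ℝ) : |k * Real.sin t| < 1 := by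
  rw [abs_mul]
  have := Real.abs_sin_le_one t
  nlinarith [abs_nonneg k, abs_nonneg (Real.sin t)]

lemma ksin_sq {k : ℝ} (hk : |k| < 1) (t : ℝ) : 0 < 1 - (k * Real.sin t) ^ 2 := by
  have := (sq_lt_one_iff_abs_lt_one (k * Real.sin t)).2 (ksin_abs hk t)
  linarith

lemma cc_pos {k : ℝ} (hk : |k| < 1) (t : ℝ) : 0 < cc k t := Real.sqrt_pos.2 (ksin_sq hk t)

lemma cc_sq {k : ℝ} (hk : |k| < 1) (t : ℝ) : cc k t ^ 2 = 1 - (k * Real.sin t) ^ 2 :=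
  Real.sq_sqrt (ksin_sq hk t).le

lemma hasDerivAt_uu_t {k : ℝ} (hk : |k| < 1) (t : ℝ) :
    HasDerivAt (uu k) (2 * k * Real.cos t / cc k t) t := by
  have h := abs_lt.1 (ksin_abs hk t)
  have := ((Real.hasDerivAt_arcsin h.1.ne' h.2.ne).comp t ((Real.hasDerivAt_sin t).const_mul k)).const_mul 2
  convert! this using 1
  unfold cc; ring

lemma hasDerivAt_uu_k {k : ℝ} (hk : |k| < 1) (t : ℝ) :
    HasDerivAt (fun k => uu k t) (2 * Real.sin t / cc k t) k := by
  have h := abs_lt.1 (ksin_abs hk t)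
  have := ((Real.hasDerivAt_arcsin h.1.ne' h.2.ne).comp k ((hasDerivAt_id k).mul_const (Real.sin t))).const_mul 2
  convert! this using 1
  unfold cc; simp; ring

lemma hasDerivAt_cc_t {k : ℝ} (hk : |k| < 1) (t : ℝ) :
    HasDerivAt (cc k) (-(k ^ 2 * Real.sin t * Real.cos t) / cc k t) t := by
  have := ((((Real.hasDerivAt_sin t).const_mul k).pow 2).const_sub 1).sqrt (ksin_sq hk t).ne'
  have h0 := (cc_pos hk t).ne'
  convert! this using 1
  unfold cc at h0 ⊢
  simp only [Nat.cast_ofNat, Pi.pow_apply, Nat.add_one_sub_one, pow_one]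
  field_simp

lemma hasDerivAt_cc_k {k : ℝ} (hk : |k| < 1) (t : ℝ) :
    HasDerivAt (fun k => cc k t) (-(k * Real.sin t ^ 2) / cc k t) k := by
  have := ((((hasDerivAt_id k).mul_const (Real.sin t)).pow 2).const_sub 1).sqrt (ksin_sq hk t).ne'
  have h0 := (cc_pos hk t).ne'
  convert! this using 1
  unfold cc at h0 ⊢
  simp only [Nat.cast_ofNat, id, Pi.pow_apply, Nat.add_one_sub_one, pow_one]
  field_simp

lemma continuous_uu (k : ℝ) : Continuous (uu k) := by
  unfold uu
  exact (Real.continuous_arcsin.comp (by fun_prop)).const_mul 2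

lemma continuous_cc (k : ℝ) : Continuous (cc k) := by
  unfold cc; fun_prop

lemma abs_uu_le (k t : ℝ) : |uu k t| ≤ Real.pi := by
  unfold uu
  rw [abs_le]
  constructor <;> linarith [Real.neg_pi_div_two_le_arcsin (k * Real.sin t), Real.arcsin_le_pi_div_two (k * Real.sin t)]

/-- The integrand of the key integral. -/
def HH (k t : ℝ) : ℝ := uu k t * (k * Real.sin t / cc k t)

/-- Its derivative in `k`. -/
def HD (k t : ℝ) : ℝ := 2 * k * Real.sin t ^ 2 / cc k t ^ 2 + uu k t * Real.sin t / cc k t ^ 3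

lemma hasDerivAt_HH {k : ℝ} (hk : |k| < 1) (t : ℝ) :
    HasDerivAt (fun k => HH k t) (HD k t) k := by
  have h0 := (cc_pos hk t).ne'
  have h := (hasDerivAt_uu_k hk t).mul
    ((((hasDerivAt_id k).mul_const (Real.sin t))).div (hasDerivAt_cc_k hk t) h0)
  convert! h using 1
  unfold HD
  have h2 := cc_sq hk t
  simp only [id, Pi.div_apply]
  field_simp
  rw [h2]
  ring

lemma integral_HD {k : ℝ} (hk : |k| < 1) :
    ∫ t in (-(Real.pi / 2))..(Real.pi / 2), HD k t = 2 * Real.pi * k / (1 - k ^ 2) := by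
  have hk2 : 0 < 1 - k ^ 2 := by
    have := (sq_lt_one_iff_abs_lt_one k).2 hk
    linarith
  have hP : ∀ t : ℝ, HasDerivAt (fun t => -(uu k t * Real.cos t / cc k t) / (1 - k ^ 2) + 2 * k / (1 - k ^ 2) * t)
      (HD k t) t := by
    intro t
    have h0 := (cc_pos hk t).ne'
    have h := ((((hasDerivAt_uu_t hk t).mul (Real.hasDerivAt_cos t)).div (hasDerivAt_cc_t hk t) h0).neg.div_const
      (1 - k ^ 2)).add ((hasDerivAt_id t).const_mul (2 * k / (1 - k ^ 2)))
    convert! h using 1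
    unfold HD
    have h2 := cc_sq hk t
    have h3 := Real.sin_sq_add_cos_sq t
    have h2' : cc k t ^ 2 = 1 - k ^ 2 * (1 - Real.cos t ^ 2) := by rw [h2]; linear_combination (-k ^ 2) * h3
    have h4 : Real.sin t ^ 2 = 1 - Real.cos t ^ 2 := by linarith
    simp only [Pi.mul_apply]
    field_simp
    linear_combination (-(uu k t * Real.sin t) - 2 * k * cc k t) * h2' + 2 * k * cc k t * (1 - k ^ 2) * h4
  have hc : Continuous (HD k) := by
    unfold HD
    have h0 := fun t => (cc_pos hk t).ne'
    have h1 := continuous_uu k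
    have h2 := continuous_cc k
    refine Continuous.add (Continuous.div (by fun_prop) (by fun_prop) fun t => pow_ne_zero _ (h0 t))
      (Continuous.div (by fun_prop) (by fun_prop) fun t => pow_ne_zero _ (h0 t))
  rw [intervalIntegral.integral_eq_sub_of_hasDerivAt (fun t _ => hP t) (hc.intervalIntegrable _ _)]
  simp
  ring

lemma hasDerivAt_integral_HH {k : ℝ} (hk : |k| < 1) :
    HasDerivAt (fun k => ∫ t in (-(Real.pi / 2))..(Real.pi / 2), HH k t) (2 * Real.pi * k / (1 - k ^ 2)) k := by
  rw [← integral_HD hk]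
  obtain ⟨k1, hk1, hk1'⟩ := exists_between hk
  have hk1p : 0 < k1 := (abs_nonneg k).trans_lt hk1
  have hk1a : |k1| < 1 := by rwa [abs_of_pos hk1p]
  have hcontH : ∀ {x : ℝ}, |x| < 1 → Continuous (HH x) := by
    intro x hx
    unfold HH
    have h0 := fun t => (cc_pos hx t).ne'
    have h1 := continuous_uu x
    have h2 := continuous_cc x
    exact h1.mul (Continuous.div (by fun_prop) (by fun_prop) h0)
  have hcontD : ∀ {x : ℝ}, |x| < 1 → Continuous (HD x) := by
    intro x hx
    unfold HD
    have h0 := fun t => (cc_pos hx t).ne'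
    have h1 := continuous_uu x
    have h2 := continuous_cc x
    refine Continuous.add (Continuous.div (by fun_prop) (by fun_prop) fun t => pow_ne_zero _ (h0 t))
      (Continuous.div (by fun_prop) (by fun_prop) fun t => pow_ne_zero _ (h0 t))
  have hs : {x : ℝ | |x| < k1} ∈ 𝓝 k := (isOpen_lt continuous_abs continuous_const).mem_nhds hk1
  set d := √(1 - k1 ^ 2) with hd
  have hk12 : 0 < 1 - k1 ^ 2 := by
    have := (sq_lt_one_iff_abs_lt_one k1).2 hk1a
    linarith
  have hdp : 0 < d := Real.sqrt_pos.2 hk12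
  refine (intervalIntegral.hasDerivAt_integral_of_dominated_loc_of_deriv_le (F := HH) (F' := HD)
    (bound := fun _ => 2 / d ^ 2 + Real.pi / d ^ 3) hs ?_ ?_ ?_ ?_ ?_ ?_).2
  · filter_upwards [hs] with x hx
    exact (hcontH (lt_trans hx hk1')).aestronglyMeasurable
  · exact (hcontH hk).intervalIntegrable _ _
  · exact (hcontD hk).aestronglyMeasurable
  · refine Eventually.of_forall fun t _ x hx => ?_
    have hx1 : |x| < 1 := lt_trans hx hk1'
    have hcd : d ≤ cc x t := by
      apply Real.sqrt_le_sqrt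
      have h1 : |x * Real.sin t| ≤ k1 := by
        rw [abs_mul]
        have := Real.abs_sin_le_one t
        have hx' : |x| < k1 := hx
        nlinarith [abs_nonneg x, abs_nonneg (Real.sin t)]
      have := sq_le_sq' (abs_le.1 h1).1 (abs_le.1 h1).2
      linarith
    have hs1 := Real.abs_sin_le_one t
    unfold HD
    refine (norm_add_le _ _).trans ?_
    rw [Real.norm_eq_abs, Real.norm_eq_abs, abs_div, abs_div, abs_mul, abs_mul, abs_mul, abs_pow, abs_pow, abs_pow,
      abs_of_pos (cc_pos hx1 t), abs_of_pos (by norm_num : (0 : ℝ) < 2)]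
    have h3 : |Real.sin t| ^ 2 ≤ 1 := pow_le_one₀ (abs_nonneg _) hs1
    have h4 := abs_uu_le x t
    have h5 : 2 * |x| * |Real.sin t| ^ 2 ≤ 2 := by nlinarith [abs_nonneg x, sq_nonneg |Real.sin t|]
    have h6 : |uu x t| * |Real.sin t| ≤ Real.pi := by nlinarith [abs_nonneg (uu x t), Real.pi_pos]
    gcongr
  · exact intervalIntegrable_const
  · exact Eventually.of_forall fun t _ x hx => hasDerivAt_HH (lt_trans hx hk1') t

lemma integral_HH {k : ℝ} (hk0 : 0 ≤ k) (hk : k < 1) :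
    ∫ t in (-(Real.pi / 2))..(Real.pi / 2), HH k t = -(Real.pi * Real.log (1 - k ^ 2)) := by
  have hD : ∀ x ∈ Set.Icc 0 k, HasDerivAt
      (fun x => (∫ t in (-(Real.pi / 2))..(Real.pi / 2), HH x t) + Real.pi * Real.log (1 - x ^ 2)) 0 x := by
    intro x hx
    have hx1 : |x| < 1 := by rw [abs_of_nonneg hx.1]; linarith [hx.2]
    have h2 : 0 < 1 - x ^ 2 := by
      have := (sq_lt_one_iff_abs_lt_one x).2 hx1
      linarith
    have h := (hasDerivAt_integral_HH hx1).add
      ((((hasDerivAt_pow 2 x).const_sub 1).log h2.ne').const_mul Real.pi)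
    convert! h using 1
    field_simp
    simp
  have := constant_of_has_deriv_right_zero (a := 0) (b := k) (fun x hx => (hD x hx).continuousAt.continuousWithinAt)
    (fun x hx => (hD x ⟨hx.1, hx.2.le⟩).hasDerivWithinAt) k ⟨hk0, le_rfl⟩
  simp [HH] at this
  simp only [HH]
  linarith

/-- `e^{iu/2}`. -/
def ee (k t : ℝ) : ℂ := (cc k t : ℂ) + Complex.I * ((k * Real.sin t : ℝ) : ℂ)

lemma exp_uu {k : ℝ} (hk : |k| < 1) (t : ℝ) :
    Complex.exp ((uu k t : ℝ) * Complex.I) = ee k t ^ 2 := by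
  have h := abs_lt.1 (ksin_abs hk t)
  have : Complex.exp (((Real.arcsin (k * Real.sin t) : ℝ) : ℂ) * Complex.I) = ee k t := by
    rw [Complex.exp_mul_I, ← Complex.ofReal_cos, ← Complex.ofReal_sin, Real.cos_arcsin,
      Real.sin_arcsin h.1.le h.2.le]
    unfold ee cc
    ring
  rw [← this, ← Complex.exp_nat_mul]
  congr 1
  unfold uu
  push_cast
  ring

lemma ee_mul_conj {k : ℝ} (hk : |k| < 1) (t : ℝ) :
    ee k t * ((cc k t : ℂ) - Complex.I * ((k * Real.sin t : ℝ) : ℂ)) = 1 := by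
  have h : ((cc k t : ℂ)) ^ 2 = 1 - ((k * Real.sin t : ℝ) : ℂ) ^ 2 := by exact_mod_cast cc_sq hk t
  unfold ee
  linear_combination h - ((k * Real.sin t : ℝ) : ℂ) ^ 2 * Complex.I_sq

/-- The smooth weight after substitution. -/
def WW (k t : ℝ) : ℂ :=
  Complex.I * (2 * (k : ℂ) ^ 2 + Complex.I * (2 - 2 * (k : ℂ) ^ 2) * ((k * Real.sin t / cc k t : ℝ) : ℂ))

lemma image_uu {φ : ℝ} (h0 : 0 ≤ φ) (h1 : φ < Real.pi / 2) :
    (fun t => Real.pi / 2 + uu (Real.sin ((Real.pi / 2 - φ) / 2)) t) '' Set.Ioo (-(Real.pi / 2)) (Real.pi / 2)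
      = Set.Ioo φ (Real.pi - φ) := by
  have hpi := Real.pi_pos
  set a := (Real.pi / 2 - φ) / 2 with ha
  have ha0 : 0 < a := by linarith
  have ha1 : a < Real.pi / 2 := by linarith
  have hk : 0 < Real.sin a := Real.sin_pos_of_pos_of_lt_pi ha0 (by linarith)
  have hk1 : Real.sin a ≤ 1 := Real.sin_le_one a
  ext θ
  simp only [Set.mem_image, Set.mem_Ioo]
  constructor
  · rintro ⟨t, ⟨ht1, ht2⟩, rfl⟩
    have hs1 : Real.sin t < 1 := by
      have := Real.strictMonoOn_sin ⟨ht1.le, ht2.le⟩ ⟨by linarith, le_rfl⟩ ht2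
      rwa [Real.sin_pi_div_two] at this
    have hs2 : -1 < Real.sin t := by
      have := Real.strictMonoOn_sin ⟨le_rfl, by linarith⟩ ⟨ht1.le, ht2.le⟩ ht1
      rwa [Real.sin_neg, Real.sin_pi_div_two] at this
    have e1 : Real.arcsin (Real.sin a) = a := Real.arcsin_sin (by linarith) (by linarith)
    have e2 : Real.arcsin (-Real.sin a) = -a := by rw [Real.arcsin_neg, e1]
    have hlt : Real.arcsin (Real.sin a * Real.sin t) < a := by
      refine lt_of_lt_of_eq ?_ e1
      exact Real.strictMonoOn_arcsin ⟨by nlinarith, by nlinarith⟩ ⟨by linarith, hk1⟩ (by nlinarith)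
    have hgt : -a < Real.arcsin (Real.sin a * Real.sin t) := by
      rw [← e2]
      exact Real.strictMonoOn_arcsin ⟨by linarith, by linarith⟩ ⟨by nlinarith, by nlinarith⟩ (by nlinarith)
    unfold uu
    constructor <;> linarith
  · rintro ⟨hθ1, hθ2⟩
    set v := (θ - Real.pi / 2) / 2 with hv
    have hv1 : -a < v := by linarith
    have hv2 : v < a := by linarith
    have hs1 : Real.sin v < Real.sin a :=
      Real.strictMonoOn_sin ⟨by linarith, by linarith⟩ ⟨by linarith, by linarith⟩ hv2
    have hs2 : -Real.sin a < Real.sin v := by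
      rw [← Real.sin_neg]
      exact Real.strictMonoOn_sin ⟨by linarith, by linarith⟩ ⟨by linarith, by linarith⟩ hv1
    have hq1 : Real.sin v / Real.sin a < 1 := (div_lt_one hk).2 hs1
    have hq2 : -1 < Real.sin v / Real.sin a := by rw [lt_div_iff₀ hk]; linarith
    refine ⟨Real.arcsin (Real.sin v / Real.sin a), ⟨Real.neg_pi_div_two_lt_arcsin.2 hq2,
      Real.arcsin_lt_pi_div_two.2 hq1⟩, ?_⟩
    unfold uu
    rw [Real.sin_arcsin hq2.le hq1.le, mul_div_cancel₀ _ hk.ne', Real.arcsin_sin (by linarith) (by linarith)]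
    linarith

lemma subst_integral {φ : ℝ} (h0 : 0 ≤ φ) (h1 : φ < Real.pi / 2) {k : ℝ}
    (hkd : k = Real.sin ((Real.pi / 2 - φ) / 2)) (hk0 : 0 < k) (hk : |k| < 1) (g : ℝ → ℂ) :
    ∫ θ in φ..(Real.pi - φ), g θ = ∫ t in (-(Real.pi / 2))..(Real.pi / 2),
      ((2 * k * Real.cos t / cc k t : ℝ) : ℂ) * g (Real.pi / 2 + uu k t) := by
  have hpi := Real.pi_pos
  rw [intervalIntegral.integral_of_le (by linarith), intervalIntegral.integral_of_le (by linarith),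
    integral_Ioc_eq_integral_Ioo, integral_Ioc_eq_integral_Ioo, ← image_uu h0 h1, ← hkd,
    integral_image_eq_integral_abs_deriv_smul measurableSet_Ioo
      (fun t _ => ((hasDerivAt_uu_t hk t).const_add (Real.pi / 2)).hasDerivWithinAt)]
  · refine setIntegral_congr_fun measurableSet_Ioo fun t ht => ?_
    have : 0 ≤ 2 * k * Real.cos t / cc k t := by
      have := Real.cos_pos_of_mem_Ioo ht
      have := cc_pos hk t
      positivity
    simp only [abs_of_nonneg this, Complex.real_smul]
  · intro x hx y hy hxy
    simp only [uu] at hxy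
    have hx' := abs_lt.1 (ksin_abs hk x)
    have hy' := abs_lt.1 (ksin_abs hk y)
    have h2 : Real.arcsin (k * Real.sin x) = Real.arcsin (k * Real.sin y) := by linarith
    have h3 := Real.injOn_arcsin ⟨hx'.1.le, hx'.2.le⟩ ⟨hy'.1.le, hy'.2.le⟩ h2
    have h4 : Real.sin x = Real.sin y := mul_left_cancel₀ hk0.ne' h3
    exact Real.injOn_sin ⟨hx.1.le, hx.2.le⟩ ⟨hy.1.le, hy.2.le⟩ h4

/-- The modulus `k` as a function of `c`. -/
def kOf (c : ℝ) : ℝ := Real.sin ((Real.pi / 2 - phiOf c) / 2)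

lemma sin_phiOf {c : ℝ} (hc : 1 ≤ c) : Real.sin (phiOf c) = (c - 1) / (c + 1) := by
  unfold phiOf
  apply Real.sin_arcsin
  · have : 0 ≤ (c - 1) / (c + 1) := div_nonneg (by linarith) (by linarith)
    linarith
  · rw [div_le_one (by linarith)]; linarith

lemma phiOf_nonneg {c : ℝ} (hc : 1 ≤ c) : 0 ≤ phiOf c :=
  Real.arcsin_nonneg.2 (div_nonneg (by linarith) (by linarith))

lemma phiOf_lt {c : ℝ} (hc : 1 ≤ c) : phiOf c < Real.pi / 2 :=
  Real.arcsin_lt_pi_div_two.2 (by rw [div_lt_one (by linarith)]; linarith)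

lemma kOf_pos {c : ℝ} (hc : 1 ≤ c) : 0 < kOf c := by
  have h0 := phiOf_nonneg hc
  have h1 := phiOf_lt hc
  exact Real.sin_pos_of_pos_of_lt_pi (by linarith) (by linarith)

lemma kOf_sq {c : ℝ} : Real.sin (phiOf c) = 1 - 2 * kOf c ^ 2 := by
  unfold kOf
  have := Real.cos_two_mul ((Real.pi / 2 - phiOf c) / 2)
  rw [mul_div_cancel₀ _ (two_ne_zero), Real.cos_pi_div_two_sub, Real.cos_sq'] at this
  linarith

lemma kOf_sq_le {c : ℝ} (hc : 1 ≤ c) : 2 * kOf c ^ 2 ≤ 1 := by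
  have h1 := kOf_sq (c := c)
  have h2 := Real.sin_nonneg_of_nonneg_of_le_pi (phiOf_nonneg hc) (by linarith [phiOf_lt hc, Real.pi_pos])
  linarith

lemma kOf_abs {c : ℝ} (hc : 1 ≤ c) : |kOf c| < 1 := by
  rw [← sq_lt_one_iff_abs_lt_one]
  linarith [kOf_sq_le hc]

lemma b2abs_pos {c : ℝ} (hc : 1 ≤ c) : 0 < b2abs c := by
  unfold b2abs
  have := Real.cos_pos_of_mem_Ioo (x := phiOf c) ⟨by linarith [phiOf_nonneg hc, Real.pi_pos], phiOf_lt hc⟩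
  have h2 : 0 < c ^ ((1 - c) / (2 * (1 + c))) := Real.rpow_pos_of_pos (by linarith) _
  positivity

lemma b2Of_im (c : ℝ) : (b2Of c).im = b2abs c * (1 - 2 * kOf c ^ 2) := by
  unfold b2Of
  rw [Complex.im_ofReal_mul, Complex.exp_ofReal_mul_I_im, kOf_sq]

lemma arcIntegral_eq {c : ℝ} (hc : 1 ≤ c) (Ψ : ℂ → ℂ) :
    arcIntegral (b2abs c) (phiOf c)
      (fun ζ => Ψ ζ * (1 - Complex.I * ((b2Of c).im : ℂ) / ζ) * (rBranch c ζ)⁻¹) =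
    ∫ t in (-(Real.pi / 2))..(Real.pi / 2),
      Ψ (Complex.I * (b2abs c * Complex.exp ((uu (kOf c) t : ℝ) * Complex.I))) * WW (kOf c) t := by
  unfold arcIntegral
  have hk := kOf_abs hc
  have hk0 := kOf_pos hc
  have hpi := Real.pi_pos
  rw [subst_integral (phiOf_nonneg hc) (phiOf_lt hc) (k := kOf c) rfl hk0 hk]
  rw [intervalIntegral.integral_of_le (by linarith), intervalIntegral.integral_of_le (by linarith),
    integral_Ioc_eq_integral_Ioo, integral_Ioc_eq_integral_Ioo]
  refine setIntegral_congr_fun measurableSet_Ioo fun t ht => ?_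
  have hcos := Real.cos_pos_of_mem_Ioo ht
  have hcc := cc_pos hk t
  have hR := b2abs_pos hc
  have hexp : (b2abs c : ℂ) * Complex.exp (((Real.pi / 2 + uu (kOf c) t : ℝ) : ℂ) * Complex.I) =
      Complex.I * (b2abs c * Complex.exp ((uu (kOf c) t : ℝ) * Complex.I)) := by
    have : (((Real.pi / 2 + uu (kOf c) t : ℝ) : ℂ) * Complex.I) =
      (Real.pi / 2 : ℂ) * Complex.I + (uu (kOf c) t : ℝ) * Complex.I := by push_cast; ring
    rw [this, Complex.exp_add, Complex.exp_pi_div_two_mul_I]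
    ring
  have hexp2 : Complex.I * (b2abs c : ℂ) * Complex.exp (((Real.pi / 2 + uu (kOf c) t : ℝ) : ℂ) * Complex.I) =
      Complex.I * (Complex.I * (b2abs c * Complex.exp ((uu (kOf c) t : ℝ) * Complex.I))) := by
    rw [← hexp]; ring
  simp only [hexp2, hexp]
  rw [exp_uu hk]
  set k := kOf c with hkdef
  set R := b2abs c with hRdef
  have hee := ee_mul_conj hk t
  set e := ee k t with he
  set e' := ((cc k t : ℂ) - Complex.I * ((k * Real.sin t : ℝ) : ℂ)) with he'
  have he0 : e ≠ 0 := left_ne_zero_of_mul_eq_one hee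
  have hinv : e⁻¹ = e' := inv_eq_of_mul_eq_one_right hee
  have hRC : (R : ℂ) ≠ 0 := by exact_mod_cast hR.ne'
  have hccC : (cc k t : ℂ) ≠ 0 := by exact_mod_cast hcc.ne'
  have hkC : (k : ℂ) ≠ 0 := by exact_mod_cast hk0.ne'
  have hcosC : (Real.cos t : ℂ) ≠ 0 := by exact_mod_cast hcos.ne'
  have hccsq : ((cc k t : ℂ)) ^ 2 = 1 - ((k * Real.sin t : ℝ) : ℂ) ^ 2 := by exact_mod_cast cc_sq hk t
  have hsc : (Real.sin t : ℂ) ^ 2 + (Real.cos t : ℂ) ^ 2 = 1 := by exact_mod_cast Real.sin_sq_add_cos_sq t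
  have him : ((b2Of c).im : ℂ) = R * (1 - 2 * (k : ℂ) ^ 2) := by
    rw [b2Of_im]; push_cast; rfl
  have hiz : (Complex.I * (R * e ^ 2))⁻¹ = -Complex.I * (R : ℂ)⁻¹ * e' ^ 2 := by
    rw [← hinv, mul_inv, mul_inv, Complex.inv_I, inv_pow]; ring
  have hRR : (R : ℂ) * (R : ℂ)⁻¹ = 1 := mul_inv_cancel₀ hRC
  have hsum : e ^ 2 + e' ^ 2 = 2 - 4 * (k : ℂ) ^ 2 * (Real.sin t : ℂ) ^ 2 := by
    rw [he, he']
    unfold ee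
    push_cast at hccsq ⊢
    linear_combination 2 * hccsq + 2 * (k : ℂ) ^ 2 * (Complex.sin t) ^ 2 * Complex.I_sq
  have hrad : 1 - 2 * Complex.I * ((b2Of c).im : ℂ) / (Complex.I * (R * e ^ 2)) -
      (R : ℂ) ^ 2 / (Complex.I * (R * e ^ 2)) ^ 2 = ((2 * k * Real.cos t : ℝ) * e') ^ 2 := by
    rw [div_eq_mul_inv, div_eq_mul_inv, ← inv_pow, hiz, him]
    have e1 : 1 - 2 * Complex.I * (R * (1 - 2 * (k : ℂ) ^ 2)) * (-Complex.I * (R : ℂ)⁻¹ * e' ^ 2) -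
        (R : ℂ) ^ 2 * (-Complex.I * (R : ℂ)⁻¹ * e' ^ 2) ^ 2 =
        1 - 2 * (1 - 2 * (k : ℂ) ^ 2) * e' ^ 2 + e' ^ 4 := by
      field_simp
      ring_nf
      simp only [Complex.I_sq]
      ring
    rw [e1]
    push_cast at hsum hsc ⊢
    linear_combination e' ^ 2 * hsum - (e * e' + 1) * hee - 4 * (k : ℂ) ^ 2 * e' ^ 2 * hsc
  have hre : 0 < (((2 * k * Real.cos t : ℝ) : ℂ) * e').re := by
    rw [Complex.re_ofReal_mul, he']
    have : ((cc k t : ℂ) - Complex.I * ((k * Real.sin t : ℝ) : ℂ)).re = cc k t := by simp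
    rw [this]
    positivity
  have hr : rBranch c (Complex.I * (R * e ^ 2)) = Complex.I * (R * e ^ 2) * ((2 * k * Real.cos t : ℝ) * e') := by
    unfold rBranch
    rw [← hRdef, hrad, one_div, Complex.sq_cpow_two_inv hre]
  have hW : WW k t = Complex.I * (e - (1 - 2 * (k : ℂ) ^ 2) * e') / cc k t := by
    unfold WW
    rw [he, he']
    unfold ee
    push_cast
    field_simp
    ring
  rw [hr, him, hW, ← hinv]
  generalize Ψ (Complex.I * (R * e ^ 2)) = ψ
  have hI := Complex.I_ne_zero
  push_cast at hcosC ⊢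
  field_simp

lemma uu_neg (k t : ℝ) : uu k (-t) = -uu k t := by
  unfold uu; rw [Real.sin_neg, mul_neg, Real.arcsin_neg]; ring

lemma cc_neg (k t : ℝ) : cc k (-t) = cc k t := by
  unfold cc; rw [Real.sin_neg, mul_neg, neg_sq]

lemma integral_odd_zero {f : ℝ → ℂ} (hf : ∀ t, f (-t) = -f t) (a : ℝ) : ∫ t in (-a)..a, f t = 0 := by
  have h : ∫ t in (-a)..a, f (-t) = ∫ t in (-a)..a, f t := by
    rw [intervalIntegral.integral_comp_neg]; simp
  simp only [hf, intervalIntegral.integral_neg] at h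
  have : (2 : ℂ) * ∫ t in (-a)..a, f t = 0 := by linear_combination -h
  simpa using this

lemma continuous_ratio {k : ℝ} (hk : |k| < 1) : Continuous (fun t => k * Real.sin t / cc k t) := by
  have h2 := continuous_cc k
  exact Continuous.div (by fun_prop) h2 fun t => (cc_pos hk t).ne'

lemma continuous_WW {k : ℝ} (hk : |k| < 1) : Continuous (WW k) := by
  unfold WW
  have := Complex.continuous_ofReal.comp (continuous_ratio hk)
  simp only [Function.comp_def] at this
  fun_prop

lemma integral_WW {k : ℝ} (hk : |k| < 1) :
    ∫ t in (-(Real.pi / 2))..(Real.pi / 2), WW k t = Complex.I * (2 * (k : ℂ) ^ 2) * Real.pi := by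
  have hc := Complex.continuous_ofReal.comp (continuous_ratio hk)
  simp only [Function.comp_def] at hc
  have e : ∀ t, WW k t = Complex.I * (2 * (k : ℂ) ^ 2) +
      (Complex.I * (Complex.I * (2 - 2 * (k : ℂ) ^ 2))) * ((k * Real.sin t / cc k t : ℝ) : ℂ) := by
    intro t; unfold WW; ring
  have hz : ∫ t in (-(Real.pi / 2))..(Real.pi / 2), ((k * Real.sin t / cc k t : ℝ) : ℂ) = 0 := by
    apply integral_odd_zero
    intro t
    rw [cc_neg, Real.sin_neg]; push_cast; ring
  simp only [e]
  rw [intervalIntegral.integral_add (by simp) ((by fun_prop : Continuous _).intervalIntegrable _ _),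
    intervalIntegral.integral_const, intervalIntegral.integral_const_mul, hz, Complex.real_smul]
  push_cast
  ring

lemma integral_uWW {k : ℝ} (hk0 : 0 ≤ k) (hk1 : k < 1) :
    ∫ t in (-(Real.pi / 2))..(Real.pi / 2), Complex.I * (uu k t : ℂ) * WW k t =
      Complex.I * (2 - 2 * (k : ℂ) ^ 2) * (Real.pi * Real.log (1 - k ^ 2) : ℝ) := by
  have hk : |k| < 1 := by rwa [abs_of_nonneg hk0]
  have hc := Complex.continuous_ofReal.comp (continuous_ratio hk)
  have hu := Complex.continuous_ofReal.comp (continuous_uu k)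
  simp only [Function.comp_def] at hc hu
  have e : ∀ t, Complex.I * (uu k t : ℂ) * WW k t = (-(2 * (k : ℂ) ^ 2)) * (uu k t : ℂ) +
      (-(Complex.I * (2 - 2 * (k : ℂ) ^ 2))) * ((HH k t : ℝ) : ℂ) := by
    intro t; unfold WW HH; push_cast
    ring_nf
    simp only [Complex.I_sq, Complex.I_pow_three]
    ring
  have hH : Continuous (fun t => ((HH k t : ℝ) : ℂ)) := by
    unfold HH
    push_cast at hc ⊢
    exact hu.mul hc
  simp only [e]
  rw [intervalIntegral.integral_add ((by fun_prop : Continuous _).intervalIntegrable _ _)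
    ((by fun_prop : Continuous _).intervalIntegrable _ _),
    intervalIntegral.integral_const_mul, intervalIntegral.integral_const_mul, integral_odd_zero,
    intervalIntegral.integral_ofReal, integral_HH hk0 hk1]
  · push_cast; ring
  · intro t
    rw [uu_neg]; push_cast; ring

lemma aesm_logGammaP {w : ℝ → ℂ} (hw : Continuous w) (hre : ∀ t, 0 < (w t).re) (μ : Measure ℝ) :
    AEStronglyMeasurable (fun t => logGammaP (w t)) μ := by
  refine aestronglyMeasurable_of_tendsto_ae atTop (f := fun (N : ℕ) t => w t * (Real.log N : ℂ) +
    ∑ k ∈ Finset.range N, (Real.log ((k : ℝ) + 1) : ℂ)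
      - ∑ k ∈ Finset.range (N + 1), Complex.log (w t + k)) ?_ (Eventually.of_forall fun t => tendsto_logGammaP (hre t))
  intro N
  apply Continuous.aestronglyMeasurable
  refine Continuous.sub (by fun_prop) (continuous_finsetSum _ fun k _ => ?_)
  refine Continuous.clog (by fun_prop) fun t => Or.inl ?_
  have := hre t
  simp
  positivity

lemma exp_uu_re {k : ℝ} (hk2 : 2 * k ^ 2 ≤ 1) (hk : |k| < 1) (t : ℝ) :
    0 ≤ (Complex.exp ((uu k t : ℝ) * Complex.I)).re := by
  rw [Complex.exp_ofReal_mul_I_re]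
  unfold uu
  have h := abs_lt.1 (ksin_abs hk t)
  rw [Real.cos_two_mul, Real.cos_sq', Real.sin_arcsin h.1.le h.2.le]
  have := Real.sin_sq_le_one t
  nlinarith [sq_nonneg k]

lemma log_exp_uu {k : ℝ} (hk2 : 2 * k ^ 2 ≤ 1) (hk : |k| < 1) (t : ℝ) {x : ℝ} (hx : 0 < x) :
    Complex.log (x * Complex.exp ((uu k t : ℝ) * Complex.I)) = Real.log x + Complex.I * (uu k t : ℂ) := by
  rw [Complex.log_ofReal_mul hx (Complex.exp_ne_zero _)]
  have h := abs_lt.1 (ksin_abs hk t)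
  have h1 : -Real.pi < uu k t := by
    have := Real.neg_pi_div_two_lt_arcsin.2 h.1
    unfold uu; linarith
  have h2 : uu k t ≤ Real.pi := (abs_le.1 (abs_uu_le k t)).2
  rw [Complex.log_exp (by simpa using h1) (by simpa using h2)]
  ring

lemma integral_lin4 {f0 f1 f2 f3 g : ℝ → ℂ} (h0 : Continuous f0) (h1 : Continuous f1) (h2 : Continuous f2)
    (h3 : Continuous f3) {a b : ℝ} (hg : IntervalIntegrable g volume a b) (x0 x1 x2 x3 : ℂ) :
    ∫ t in a..b, (x0 * f0 t + x1 * f1 t + x2 * f2 t + x3 * f3 t + g t) =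
      x0 * (∫ t in a..b, f0 t) + x1 * (∫ t in a..b, f1 t) + x2 * (∫ t in a..b, f2 t) +
      x3 * (∫ t in a..b, f3 t) + ∫ t in a..b, g t := by
  rw [intervalIntegral.integral_add ((by fun_prop : Continuous _).intervalIntegrable _ _) hg,
    intervalIntegral.integral_add ((by fun_prop : Continuous _).intervalIntegrable _ _)
      ((by fun_prop : Continuous _).intervalIntegrable _ _),
    intervalIntegral.integral_add ((by fun_prop : Continuous _).intervalIntegrable _ _)
      ((by fun_prop : Continuous _).intervalIntegrable _ _),
    intervalIntegral.integral_add ((by fun_prop : Continuous _).intervalIntegrable _ _)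
      ((by fun_prop : Continuous _).intervalIntegrable _ _)]
  simp only [intervalIntegral.integral_const_mul]

/-- Expansion of the integral in the scale variable `τ = s^ρ`. -/
lemma integral_expansion {k m R : ℝ} (hk0 : 0 ≤ k) (hk2 : 2 * k ^ 2 ≤ 1) (hm : 0 < m) (hR : 0 < R) (G : ℂ) :
    ∃ A0 A1 : ℂ, ∃ B T : ℝ, 0 ≤ B ∧ ∀ τ : ℝ, 0 < τ → T ≤ τ →
    ‖(∫ t in (-(Real.pi / 2))..(Real.pi / 2),
        (logGammaP (m + τ * (R * Complex.exp ((uu k t : ℝ) * Complex.I))) - G) * WW k t) -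
      (τ * Real.log τ * A0 + τ * A1 +
        ((m - 1 / 2) * (Real.log τ + Real.log R) + (Real.log (2 * Real.pi) / 2 : ℝ) - G) *
          (Complex.I * (2 * (k : ℂ) ^ 2) * Real.pi) +
        (m - 1 / 2) * (Complex.I * (2 - 2 * (k : ℂ) ^ 2) * (Real.pi * Real.log (1 - k ^ 2) : ℝ)))‖ ≤ B / τ := by
  have hk1 : k < 1 := by nlinarith
  have hk : |k| < 1 := by rwa [abs_of_nonneg hk0]
  obtain ⟨C, T, hC, hT, hST⟩ := stirling_shift hm
  have hW := continuous_WW hk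
  have hu := Complex.continuous_ofReal.comp (continuous_uu k)
  simp only [Function.comp_def] at hu
  have hE : Continuous (fun t => Complex.exp ((uu k t : ℝ) * Complex.I)) := by fun_prop
  obtain ⟨M, hM⟩ := (isCompact_uIcc (a := -(Real.pi / 2)) (b := Real.pi / 2)).exists_bound_of_continuousOn hW.continuousOn
  have hM0 : 0 ≤ M := (norm_nonneg _).trans (hM _ Set.left_mem_uIcc)
  set f0 : ℝ → ℂ := fun t => R * Complex.exp ((uu k t : ℝ) * Complex.I) * WW k t with hf0
  set f1 : ℝ → ℂ := fun t => R * Complex.exp ((uu k t : ℝ) * Complex.I) *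
    (Real.log R + Complex.I * (uu k t : ℂ) - 1) * WW k t with hf1
  set f3 : ℝ → ℂ := fun t => Complex.I * (uu k t : ℂ) * WW k t with hf3
  have hc0 : Continuous f0 := by fun_prop
  have hc1 : Continuous f1 := by fun_prop
  have hc3 : Continuous f3 := by fun_prop
  refine ⟨∫ t in (-(Real.pi / 2))..(Real.pi / 2), f0 t, ∫ t in (-(Real.pi / 2))..(Real.pi / 2), f1 t,
    C / R * M * Real.pi, T / R, by positivity, ?_⟩
  intro τ hτ hτT
  rw [← integral_WW hk, ← integral_uWW hk0 hk1]
  have hτR : 0 < τ * R := by positivity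
  set z : ℝ → ℂ := fun t => ((τ * R : ℝ) : ℂ) * Complex.exp ((uu k t : ℝ) * Complex.I) with hz
  have hzc : Continuous z := by fun_prop
  have hzn : ∀ t, ‖z t‖ = τ * R := by
    intro t
    rw [hz, norm_mul, Complex.norm_exp_ofReal_mul_I, Complex.norm_real, Real.norm_of_nonneg hτR.le, mul_one]
  have hzre : ∀ t, 0 ≤ (z t).re := by
    intro t
    rw [hz, Complex.re_ofReal_mul]
    exact mul_nonneg hτR.le (exp_uu_re hk2 hk t)
  set D : ℝ → ℂ := fun t => logGammaP (m + z t) - ((z t + m - 1 / 2) * Complex.log (z t) - z t +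
      ((Real.log (2 * Real.pi) / 2 : ℝ) : ℂ)) with hD
  have hlog : ∀ t, Complex.log (z t) = Real.log τ + Real.log R + Complex.I * (uu k t : ℂ) := by
    intro t
    rw [hz, log_exp_uu hk2 hk t hτR, Real.log_mul hτ.ne' hR.ne']
    push_cast
    ring
  have hDn : ∀ t, ‖D t‖ ≤ C / (τ * R) := by
    intro t
    have := hST (z t) (hzre t) (by rw [hzn]; rwa [div_le_iff₀ hR] at hτT)
    rwa [hzn] at this
  have hDm : ∀ μ : Measure ℝ, AEStronglyMeasurable D μ := by
    intro μ
    refine (aesm_logGammaP (by fun_prop) (fun t => ?_) μ).sub (Continuous.aestronglyMeasurable ?_)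
    · have := hzre t
      simp only [Complex.add_re, Complex.ofReal_re]; linarith
    · simp only [hlog]
      fun_prop
  have hDWn : ∀ t ∈ Set.uIoc (-(Real.pi / 2)) (Real.pi / 2), ‖D t * WW k t‖ ≤ C / (τ * R) * M := by
    intro t ht
    rw [norm_mul]
    have := hM t (Set.uIoc_subset_uIcc ht)
    have := hDn t
    gcongr
  have hDi : IntervalIntegrable (fun t => D t * WW k t) volume (-(Real.pi / 2)) (Real.pi / 2) := by
    refine (intervalIntegrable_const (c := C / (τ * R) * M)).mono_fun ((hDm _).mul hW.aestronglyMeasurable) ?_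
    filter_upwards [ae_restrict_mem measurableSet_uIoc] with t ht
    exact (hDWn t ht).trans (le_abs_self _)
  have hint : ∀ t, (logGammaP (m + τ * (R * Complex.exp ((uu k t : ℝ) * Complex.I))) - G) * WW k t =
      (τ * Real.log τ) * f0 t + τ * f1 t +
        ((m - 1 / 2) * (Real.log τ + Real.log R) + (Real.log (2 * Real.pi) / 2 : ℝ) - G) * WW k t +
        (m - 1 / 2) * f3 t + D t * WW k t := by
    intro t
    have e : (m : ℂ) + τ * (R * Complex.exp ((uu k t : ℝ) * Complex.I)) = m + z t := by
      rw [hz]; push_cast; ring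
    rw [e]
    simp only [hD, hlog, hf0, hf1, hf3]
    simp only [hz]
    push_cast
    ring
  simp only [hint]
  rw [integral_lin4 hc0 hc1 hW hc3 hDi, add_sub_cancel_left]
  refine (intervalIntegral.norm_integral_le_of_norm_le_const hDWn).trans (le_of_eq ?_)
  rw [show Real.pi / 2 - -(Real.pi / 2) = Real.pi by ring, abs_of_pos Real.pi_pos]
  field_simp

/-- asymptotics of `I_{1,α}`. -/
theorem I1alpha_asymptotics (r q : ℕ) (hrq : q < r) (νmin α : ℝ)
    (hνmin : -1 < νmin) (hα : νmin ≤ α) :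
    HasStdExpansion (rhoOf ((r : ℝ) - q))
      (Ifun ((r : ℝ) - q) ((1 + 2 * α - νmin) / 2))
      ((kappa5 ((r : ℝ) - q) ((1 + 2 * α - νmin) / 2) α νmin : ℝ) : ℂ) := by
  set c : ℝ := (r : ℝ) - q with hcdef
  have hc : 1 ≤ c := by
    have : ((q + 1 : ℕ) : ℝ) ≤ r := by exact_mod_cast hrq
    push_cast at this
    linarith
  set m : ℝ := (1 + 2 * α - νmin) / 2 with hmdef
  have hm : 0 < m := by rw [hmdef]; linarith
  have hk0 := kOf_pos hc
  have hk2 := kOf_sq_le hc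
  have hR := b2abs_pos hc
  set k := kOf c with hk
  set R := b2abs c with hRdef
  set ρ := rhoOf c with hρ
  have hρ0 : 0 < ρ := by
    rw [hρ, rhoOf]; positivity
  obtain ⟨A0, A1, B, T, hB, hmain⟩ := integral_expansion hk0.le hk2 hm hR
    ((Real.log (Real.Gamma m) : ℝ) : ℂ)
  have hpi : (Real.pi : ℂ) ≠ 0 := by exact_mod_cast Real.pi_ne_zero
  have hI := Complex.I_ne_zero
  set K : ℂ := Complex.I * (1 + c) / (2 * Real.pi) with hK
  have hIf : ∀ s : ℝ, Ifun c m s = K * ∫ t in (-(Real.pi / 2))..(Real.pi / 2),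
        (logGammaP (m + (s ^ ρ : ℝ) * (R * Complex.exp ((uu k t : ℝ) * Complex.I))) -
          ((Real.log (Real.Gamma m) : ℝ) : ℂ)) * WW k t := by
    intro s
    unfold Ifun
    rw [arcIntegral_eq hc, ← intervalIntegral.integral_const_mul, ← intervalIntegral.integral_const_mul]
    congr 1
    ext t
    have e : (m : ℂ) - Complex.I * (s ^ ρ : ℝ) * (Complex.I * (R * Complex.exp ((uu k t : ℝ) * Complex.I))) =
        m + (s ^ ρ : ℝ) * (R * Complex.exp ((uu k t : ℝ) * Complex.I)) := by
      linear_combination (-((s ^ ρ : ℝ) * (R * Complex.exp ((uu k t : ℝ) * Complex.I)))) * Complex.I_sq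
    unfold PsiTilde
    rw [← hρ, e, hK]
    push_cast
    field_simp
    ring
  have hk21 : 0 < 1 - k ^ 2 := by nlinarith
  have him : (b2Of c).im = R * (1 - 2 * k ^ 2) := b2Of_im c
  have hlogs : Real.log (R + (b2Of c).im) = Real.log 2 + Real.log R + Real.log (1 - k ^ 2) ∧
      Real.log (2 * R ^ 2 / (R + (b2Of c).im)) = Real.log R - Real.log (1 - k ^ 2) := by
    have e1 : R + (b2Of c).im = 2 * R * (1 - k ^ 2) := by rw [him]; ring
    have e2 : 2 * R ^ 2 / (R + (b2Of c).im) = R / (1 - k ^ 2) := by rw [e1]; field_simp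
    rw [e2, e1, Real.log_mul (by positivity) hk21.ne', Real.log_mul (by norm_num) hR.ne',
      Real.log_div hR.ne' hk21.ne']
    exact ⟨rfl, rfl⟩
  have hkap : kappa5 c m α νmin = -(1 + c) * (((m - 1 / 2) * Real.log R + Real.log (2 * Real.pi) / 2 -
      Real.log (Real.Gamma m)) * k ^ 2 + (m - 1 / 2) * ((1 - k ^ 2) * Real.log (1 - k ^ 2))) := by
    unfold kappa5
    rw [← hRdef, hlogs.1, hlogs.2, him]
    have e3 : (2 * α - νmin) / 2 = m - 1 / 2 := by rw [hmdef]; ring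
    rw [e3]
    field_simp
    ring
  refine ⟨0, 0, 0, K * ρ * A0, K * A1, 0,
    K * ((m - 1 / 2) * ρ * (Complex.I * (2 * (k : ℂ) ^ 2) * Real.pi)), ?_⟩
  refine Asymptotics.IsBigO.of_bound (‖K‖ * B) ?_
  filter_upwards [eventually_ge_atTop (Real.exp 1), (tendsto_rpow_atTop hρ0).eventually_ge_atTop T] with s hs hsT
  have hs0 : 0 < s := (Real.exp_pos 1).trans_le hs
  have hls : 1 ≤ Real.log s := by rwa [Real.le_log_iff_exp_le hs0]
  have hτ : 0 < s ^ ρ := Real.rpow_pos_of_pos hs0 _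
  have h := hmain (s ^ ρ) hτ hsT
  rw [Real.log_rpow hs0] at h
  have hfin : Ifun c m s - (0 * ((s ^ (2 * ρ) : ℝ) : ℂ) * (Real.log s : ℝ) + 0 * ((s ^ (2 * ρ) : ℝ) : ℂ) +
          0 * ((s ^ ρ : ℝ) : ℂ) * ((Real.log s : ℝ)) ^ 2 + K * ρ * A0 * (s ^ ρ : ℝ) * (Real.log s : ℝ) +
          K * A1 * (s ^ ρ : ℝ) + 0 * ((Real.log s : ℝ) : ℂ) ^ 2 +
          K * ((m - 1 / 2) * ρ * (Complex.I * (2 * (k : ℂ) ^ 2) * Real.pi)) * (Real.log s : ℝ) +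
          ((kappa5 c m α νmin : ℝ) : ℂ)) = K * ((∫ t in (-(Real.pi / 2))..(Real.pi / 2),
        (logGammaP (m + (s ^ ρ : ℝ) * (R * Complex.exp ((uu k t : ℝ) * Complex.I))) -
          ((Real.log (Real.Gamma m) : ℝ) : ℂ)) * WW k t) -
      ((s ^ ρ : ℝ) * (ρ * Real.log s : ℝ) * A0 + (s ^ ρ : ℝ) * A1 +
        ((m - 1 / 2) * ((ρ * Real.log s : ℝ) + Real.log R) + (Real.log (2 * Real.pi) / 2 : ℝ) -
          ((Real.log (Real.Gamma m) : ℝ) : ℂ)) *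
          (Complex.I * (2 * (k : ℂ) ^ 2) * Real.pi) +
        (m - 1 / 2) * (Complex.I * (2 - 2 * (k : ℂ) ^ 2) * (Real.pi * Real.log (1 - k ^ 2) : ℝ)))) := by
    rw [hIf, mul_sub]
    generalize (∫ t in (-(Real.pi / 2))..(Real.pi / 2),
        (logGammaP (m + (s ^ ρ : ℝ) * (R * Complex.exp ((uu k t : ℝ) * Complex.I))) -
          ((Real.log (Real.Gamma m) : ℝ) : ℂ)) * WW k t) = Q
    have hKI : K * Complex.I * Real.pi = -(1 + c) / 2 := by
      rw [hK]
      field_simp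
      rw [Complex.I_sq]
      ring
    rw [hkap]
    push_cast
    linear_combination (-((((m : ℂ) - 1 / 2) * Real.log R + (Real.log (2 * Real.pi) : ℂ) / 2 -
          ((Real.log (Real.Gamma m) : ℝ) : ℂ)) * (2 * (k : ℂ) ^ 2) +
        (m - 1 / 2) * ((2 - 2 * (k : ℂ) ^ 2) * (Real.log (1 - k ^ 2) : ℂ)))) * (-hKI)
  refine (le_of_eq (congrArg norm hfin)).trans ?_
  rw [norm_mul, Real.norm_of_nonneg (by positivity), Real.rpow_neg hs0.le]
  calc _ ≤ ‖K‖ * (B / s ^ ρ) := by gcongr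
    _ = ‖K‖ * B * ((s ^ ρ)⁻¹ * 1) := by ring
    _ ≤ _ := by gcongr
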